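/- For every two projection games G and H, the collision value of the product game satisfies ‖G ⊗ H‖ ≤ ‖G‖. -/

import Mathlib

open Finset

/-- A projection game: finite nonempty question sets `Q1` (Alice) and `Q2` (Bob),
a finite nonempty alphabet `A`, and a probability mass function `μ` on triples
`(u, v, π)` where `π : A → Option A` encodes a projection constraint
(the answer pair `(α, β)` satisfies `π` iff `π β = some α`). -/
structure ProjGame where
  Q1 : Type
  Q2 : Type
  A : Type
  [fQ1 : Fintype Q1]
  [fQ2 : Fintype Q2]
  [fA : Fintype A]
  [neQ1 : Nonempty Q1]
  [neQ2 : Nonempty Q2]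
  [neA : Nonempty A]
  [dQ1 : DecidableEq Q1]
  [dQ2 : DecidableEq Q2]
  [dA : DecidableEq A]
  μ : Q1 × Q2 × (A → Option A) → ℝ
  μ_nonneg : ∀ x, 0 ≤ μ x
  μ_sum : ∑ x, μ x = 1

attribute [instance] ProjGame.fQ1 ProjGame.fQ2 ProjGame.fA
  ProjGame.neQ1 ProjGame.neQ2 ProjGame.neA ProjGame.dQ1 ProjGame.dQ2 ProjGame.dA

namespace ProjGame

variable (G : ProjGame)

/-- The `U`-marginal (Alice-side marginal) of `μ`. -/
noncomputable def wU (u : G.Q1) : ℝ := ∑ v, ∑ π, G.μ (u, v, π)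

/-- The `V`-marginal (Bob-side marginal) of `μ`. -/
noncomputable def wV (v : G.Q2) : ℝ := ∑ u, ∑ π, G.μ (u, v, π)

/-- The game operator: `(Gf)(u,α) = E_{(v,π)|u} [∑_{β : π β = some α} f (v,β)]`. -/
noncomputable def op (f : G.Q2 × G.A → ℝ) : G.Q1 × G.A → ℝ :=
  fun p =>
    (∑ v, ∑ π, G.μ (p.1, v, π) * ∑ β, if π β = some p.2 then f (v, β) else 0) / G.wU p.1

/-- Squared norm on functions on `U × Σ`: `‖g‖² = E_u [∑_α g(u,α)²]`. -/
noncomputable def normUsq (g : G.Q1 × G.A → ℝ) : ℝ := ∑ u, G.wU u * ∑ α, (g (u, α)) ^ 2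

/-- Squared norm on functions on `V × Σ`: `‖f‖² = E_v [∑_β f(v,β)²]`. -/
noncomputable def normVsq (f : G.Q2 × G.A → ℝ) : ℝ := ∑ v, G.wV v * ∑ β, (f (v, β)) ^ 2

/-- Inner product `⟨g, g'⟩ = E_u [∑_α g(u,α) g'(u,α)]`. -/
noncomputable def inn (g g' : G.Q1 × G.A → ℝ) : ℝ :=
  ∑ u, G.wU u * ∑ α, g (u, α) * g' (u, α)

/-- An assignment for Bob. -/
def IsBob (f : G.Q2 × G.A → ℝ) : Prop := (∀ p, 0 ≤ f p) ∧ ∀ v, ∑ β, f (v, β) = 1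

/-- An assignment for Alice. -/
def IsAlice (g : G.Q1 × G.A → ℝ) : Prop := (∀ p, 0 ≤ g p) ∧ ∀ u, ∑ α, g (u, α) = 1

/-- The value of the game: `val(G) = max ⟨g, Gf⟩` over assignments. -/
noncomputable def val : ℝ :=
  sSup { x | ∃ f g, G.IsBob f ∧ G.IsAlice g ∧ x = G.inn g (G.op f) }

/-- The collision value `‖G‖ = max_f ‖Gf‖` over assignments `f` for Bob. -/
noncomputable def collVal : ℝ :=
  sSup { x | ∃ f, G.IsBob f ∧ x = Real.sqrt (G.normUsq (G.op f)) }

/-- Product of projection constraints. -/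
def tensorC {A A' : Type} (π : A → Option A) (π' : A' → Option A') :
    A × A' → Option (A × A') :=
  fun b => (π b.1).bind fun a => (π' b.2).map fun a' => (a, a')

/-- The product (parallel repetition) of two projection games. -/
noncomputable def tensor (G H : ProjGame) : ProjGame where
  Q1 := G.Q1 × H.Q1
  Q2 := G.Q2 × H.Q2
  A := G.A × H.A
  μ := fun x =>
    ∑ y : (G.Q1 × G.Q2 × (G.A → Option G.A)) × (H.Q1 × H.Q2 × (H.A → Option H.A)),
      if ((y.1.1, y.2.1), (y.1.2.1, y.2.2.1), tensorC y.1.2.2 y.2.2.2) = x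
      then G.μ y.1 * H.μ y.2 else 0
  μ_nonneg := by
    intro x
    refine Finset.sum_nonneg fun y _ => ?_
    split
    · exact mul_nonneg (G.μ_nonneg _) (H.μ_nonneg _)
    · exact le_refl 0
  μ_sum := by
    rw [Finset.sum_comm]
    simp only [Finset.sum_ite_eq, Finset.mem_univ, if_true]
    rw [Fintype.sum_prod_type]
    calc (∑ y1, ∑ y2, G.μ y1 * H.μ y2)
        = (∑ y1, G.μ y1) * (∑ y2, H.μ y2) := by rw [Finset.sum_mul_sum]
      _ = 1 := by rw [G.μ_sum, H.μ_sum, mul_one]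

/-- `G.iterTensor k` is the `(k+1)`-fold parallel repetition `G^{⊗(k+1)}`. -/
noncomputable def iterTensor (G : ProjGame) : ℕ → ProjGame
  | 0 => G
  | n + 1 => G.tensor (G.iterTensor n)

/-- `val₊(G)`: supremum of values of vector assignments. -/
noncomputable def valPlus (G : ProjGame) : ℝ :=
  sSup { x | ∃ n : ℕ, 0 < n ∧ ∃ f : G.Q2 × G.A → Fin n → ℝ,
    (∀ p i, 0 ≤ f p i) ∧
    (∀ v, Real.sqrt (∑ i, (∑ β, f (v, β) i) ^ 2) ≤ 1) ∧
    x = Real.sqrt (∑ u, G.wU u * ∑ α, ∑ i, (G.op (fun q => f q i) (u, α)) ^ 2) }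

/-- `‖Th‖² = E_v [(∑_β h(v,β))²]`. -/
noncomputable def Tnormsq (G : ProjGame) (h : G.Q2 × G.A → ℝ) : ℝ :=
  ∑ v, G.wV v * (∑ β, h (v, β)) ^ 2

/-- `λ₊(G)`: supremum of `‖Gh‖/‖Th‖` over nonnegative `h` with `‖Th‖ > 0`. -/
noncomputable def lambdaPlus (G : ProjGame) : ℝ :=
  sSup { x | ∃ h : G.Q2 × G.A → ℝ, (∀ p, 0 ≤ h p) ∧
    0 < Real.sqrt (G.Tnormsq h) ∧
    x = Real.sqrt (G.normUsq (G.op h)) / Real.sqrt (G.Tnormsq h) }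

/-- The symmetrized distribution on `V × V` (with the constraints marginalized out). -/
noncomputable def msym (G : ProjGame) (v v' : G.Q2) : ℝ :=
  ∑ u, ((∑ π, G.μ (u, v, π)) * (∑ π', G.μ (u, v', π'))) / G.wU u

/-- `G` is `γ`-expanding: the Markov operator of the symmetrized constraint graph has
spectral gap at least `γ`, i.e. `|⟨x, Ax⟩| ≤ (1-γ) E_v[x(v)²]` for mean-zero `x`. -/
def IsExpanding (G : ProjGame) (γ : ℝ) : Prop :=
  ∀ x : G.Q2 → ℝ, (∑ v, G.wV v * x v) = 0 →
    |∑ v, ∑ v', G.msym v v' * x v * x v'| ≤ (1 - γ) * ∑ v, G.wV v * (x v) ^ 2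

/-- The symmetrized distribution on `(v, v', π, π')`. -/
noncomputable def msymFull (G : ProjGame) (v v' : G.Q2) (π π' : G.A → Option G.A) : ℝ :=
  ∑ u, (G.μ (u, v, π) * G.μ (u, v', π')) / G.wU u

/-- The value of the assignment `x` in the symmetrized game `G_sym`. -/
noncomputable def symValAssign (G : ProjGame) (x : G.Q2 → G.A) : ℝ :=
  ∑ v, ∑ v', ∑ π, ∑ π', G.msymFull v v' π π' *
    (if ∃ α, π (x v) = some α ∧ π' (x v') = some α then 1 else 0)

/-- The value of the symmetrized game `G_sym`. -/
noncomputable def symVal (G : ProjGame) : ℝ :=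
  sSup { r | ∃ x : G.Q2 → G.A, r = G.symValAssign x }

end ProjGame

/-! Freeze one of Alice's questions `u'` in `H` and an answer `α'` to it. Applying `H` in its own
coordinates turns an assignment `f` of the product game into a function `f_{u',α'}` on Bob's side of
`G`, and since the game operators are nonnegative kernels that multiply under products,
`‖(G ⊗ H) f‖² = E_{u'} ∑_{α'} ‖G f_{u',α'}‖²`. Sums of squares of nonnegative numbers are at most
the square of the sum, so the inner sum is at most `‖G (∑_{α'} f_{u',α'})‖²`. Finally
`∑_{α'} f_{u',α'}` has mass at most one at each question of Bob, so it can be completed to an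
assignment for `G`, which bounds each term by the squared collision value of `G`. -/

namespace ProjGame

variable {G H : ProjGame}

/-- The triples `(u, v, π)` that the referee of `G` may draw. -/
abbrev Draw (G : ProjGame) : Type := G.Q1 × G.Q2 × (G.A → Option G.A)

/-- The draw of `G ⊗ H` formed from a draw of `G` and a draw of `H`. -/
def tensorDraw (x : G.Draw) (y : H.Draw) : (G.tensor H).Draw :=
  ((x.1, y.1), (x.2.1, y.2.1), tensorC x.2.2 y.2.2)

open scoped Classical in
/-- The probability, under the distribution of `G`, of the event `E`. -/
noncomputable def prob (G : ProjGame) (E : G.Draw → Prop) : ℝ := ∑ x with E x, G.μ x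

lemma prob_nonneg (E : G.Draw → Prop) : 0 ≤ G.prob E :=
  sum_nonneg fun x _ => G.μ_nonneg x

lemma prob_fst_eq (u : G.Q1) : G.prob (fun x => x.1 = u) = G.wU u := by
  rw [prob, sum_filter, Fintype.sum_prod_type, Fintype.sum_eq_single u fun x hx => by simp [hx]]
  simp [wU, Fintype.sum_prod_type]

lemma prob_tensor {E : (G.tensor H).Draw → Prop} {E₁ : G.Draw → Prop} {E₂ : H.Draw → Prop}
    (hE : ∀ x y, E (tensorDraw x y) ↔ E₁ x ∧ E₂ y) :
    (G.tensor H).prob E = G.prob E₁ * H.prob E₂ := by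
  classical
  calc
    (G.tensor H).prob E
      = ∑ z with E z, ∑ p : G.Draw × H.Draw,
          if tensorDraw p.1 p.2 = z then G.μ p.1 * H.μ p.2 else 0 := rfl
    _ = ∑ p : G.Draw × H.Draw, if E (tensorDraw p.1 p.2) then G.μ p.1 * H.μ p.2 else 0 := by
        rw [sum_comm]
        simp only [sum_ite_eq, mem_filter, mem_univ, true_and]
    _ = ∑ p ∈ univ.filter E₁ ×ˢ univ.filter E₂, G.μ p.1 * H.μ p.2 := by
        simp only [hE, ← sum_filter, ← filter_product, univ_product_univ]
    _ = G.prob E₁ * H.prob E₂ := by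
        rw [prob, prob, sum_mul_sum, sum_product]

lemma wU_nonneg (u : G.Q1) : 0 ≤ G.wU u :=
  sum_nonneg fun _ _ => sum_nonneg fun _ _ => G.μ_nonneg _

lemma sum_wU (G : ProjGame) : ∑ u, G.wU u = 1 := by
  simp only [wU, ← G.μ_sum, Fintype.sum_prod_type]

lemma wU_tensor (u : G.Q1) (u' : H.Q1) : (G.tensor H).wU (u, u') = G.wU u * H.wU u' := by
  rw [← prob_fst_eq u, ← prob_fst_eq u']
  exact (prob_fst_eq (G := G.tensor H) (u, u')).symm.trans (prob_tensor fun _ _ => Prod.mk_inj)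

lemma tensorC_eq_some_iff {A A' : Type} {π : A → Option A} {π' : A' → Option A'}
    {b : A × A'} {a : A × A'} :
    tensorC π π' b = some a ↔ π b.1 = some a.1 ∧ π' b.2 = some a.2 := by
  simp [tensorC, Option.bind_eq_some_iff, Prod.ext_iff, and_left_comm]

/-- The matrix entry of the game operator at row `(u, α)` and column `(v, β)`: the conditional
probability given `u` that Bob receives `v` and that his answer `β` projects to `α`. Where `u` has
probability zero, division by zero makes the whole row vanish. -/
noncomputable def kernel (G : ProjGame) (a : G.Q1 × G.A) (b : G.Q2 × G.A) : ℝ :=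
  G.prob (fun x => x.1 = a.1 ∧ x.2.1 = b.1 ∧ x.2.2 b.2 = some a.2) / G.wU a.1

lemma kernel_nonneg (a : G.Q1 × G.A) (b : G.Q2 × G.A) : 0 ≤ G.kernel a b :=
  div_nonneg (prob_nonneg _) (wU_nonneg _)

lemma kernel_apply (u : G.Q1) (α : G.A) (v : G.Q2) (β : G.A) :
    G.kernel (u, α) (v, β) =
      (∑ π, if π β = some α then G.μ (u, v, π) else 0) / G.wU u := by
  simp [kernel, prob, sum_filter, Fintype.sum_prod_type, ite_and, sum_ite_irrel]

lemma kernel_tensor (u : G.Q1) (u' : H.Q1) (α : G.A) (α' : H.A) (v : G.Q2) (v' : H.Q2)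
    (β : G.A) (β' : H.A) :
    (G.tensor H).kernel ((u, u'), (α, α')) ((v, v'), (β, β')) =
      G.kernel (u, α) (v, β) * H.kernel (u', α') (v', β') := by
  rw [kernel, kernel, kernel, div_mul_div_comm]
  refine congrArg₂ (· / ·) (prob_tensor fun x y => ?_) (wU_tensor u u')
  exact (and_congr Prod.mk_inj (and_congr Prod.mk_inj tensorC_eq_some_iff)).trans (by tauto)

lemma op_eq_sum_kernel (f : G.Q2 × G.A → ℝ) (a : G.Q1 × G.A) :
    G.op f a = ∑ b, G.kernel a b * f b := by
  obtain ⟨u, α⟩ := a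
  simp only [op, Fintype.sum_prod_type, kernel_apply, sum_div, sum_mul, mul_sum]
  refine sum_congr rfl fun v _ => ?_
  rw [sum_comm]
  refine sum_congr rfl fun β _ => sum_congr rfl fun π _ => ?_
  split_ifs <;> ring

lemma op_nonneg {f : G.Q2 × G.A → ℝ} (hf : 0 ≤ f) : 0 ≤ G.op f := fun a => by
  rw [op_eq_sum_kernel]
  exact sum_nonneg fun b _ => mul_nonneg (kernel_nonneg a b) (hf b)

lemma op_mono : Monotone G.op := fun f g hfg a => by
  rw [op_eq_sum_kernel, op_eq_sum_kernel]
  exact sum_le_sum fun b _ => mul_le_mul_of_nonneg_left (hfg b) (kernel_nonneg a b)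

lemma op_sum {ι : Type*} (s : Finset ι) (f : ι → G.Q2 × G.A → ℝ) :
    G.op (∑ i ∈ s, f i) = ∑ i ∈ s, G.op (f i) := by
  ext a
  simp only [op_eq_sum_kernel, Finset.sum_apply, mul_sum]
  exact sum_comm

/-- A sub-assignment for Bob: a nonnegative function of total mass at most one at each question. -/
def IsSubBob (G : ProjGame) (f : G.Q2 × G.A → ℝ) : Prop := 0 ≤ f ∧ ∀ v, ∑ β, f (v, β) ≤ 1

lemma IsBob.isSubBob {f : G.Q2 × G.A → ℝ} (hf : G.IsBob f) : G.IsSubBob f :=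
  ⟨hf.1, fun v => (hf.2 v).le⟩

lemma IsSubBob.exists_isBob_le {f : G.Q2 × G.A → ℝ} (hf : G.IsSubBob f) :
    ∃ g, G.IsBob g ∧ f ≤ g := by
  obtain ⟨a⟩ := G.neA
  let deficit (v : G.Q2) : ℝ := 1 - ∑ β, f (v, β)
  let g : G.Q2 × G.A → ℝ := fun p => f p + if p.2 = a then deficit p.1 else 0
  have deficit_nonneg (v : G.Q2) : 0 ≤ deficit v := sub_nonneg.2 (hf.2 v)
  have hfg : f ≤ g := fun p =>
    le_add_of_nonneg_right (ite_nonneg (deficit_nonneg p.1) le_rfl)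
  refine ⟨g, ⟨fun p => (hf.1 p).trans (hfg p), fun v => ?_⟩, hfg⟩
  simp [g, deficit, sum_add_distrib]

lemma sum_kernel_le (u : G.Q1) (v : G.Q2) (β : G.A) :
    ∑ α, G.kernel (u, α) (v, β) ≤ (∑ π, G.μ (u, v, π)) / G.wU u := by
  simp only [kernel_apply, ← sum_div]
  rw [sum_comm]
  refine div_le_div_of_nonneg_right (sum_le_sum fun π _ => ?_) (wU_nonneg u)
  cases π β <;> simp [G.μ_nonneg]

lemma IsSubBob.sum_op_le_one {f : G.Q2 × G.A → ℝ} (hf : G.IsSubBob f) (u : G.Q1) :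
    ∑ α, G.op f (u, α) ≤ 1 :=
  calc
    ∑ α, G.op f (u, α)
      = ∑ v, ∑ β, (∑ α, G.kernel (u, α) (v, β)) * f (v, β) := by
        simp only [op_eq_sum_kernel, Fintype.sum_prod_type, sum_mul]
        rw [sum_comm]
        exact sum_congr rfl fun v _ => sum_comm
    _ ≤ ∑ v, ∑ β, (∑ π, G.μ (u, v, π)) / G.wU u * f (v, β) := by
        gcongr with v _ β _
        · exact hf.1 (v, β)
        · exact sum_kernel_le u v β
    _ ≤ ∑ v, (∑ π, G.μ (u, v, π)) / G.wU u := by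
        simp only [← mul_sum]
        refine sum_le_sum fun v _ => mul_le_of_le_one_right ?_ (hf.2 v)
        exact div_nonneg (sum_nonneg fun π _ => G.μ_nonneg _) (wU_nonneg u)
    _ ≤ 1 := by
        rw [← sum_div]
        exact div_self_le_one (G.wU u)

lemma normUsq_mono {g g' : G.Q1 × G.A → ℝ} (hg : 0 ≤ g) (h : g ≤ g') :
    G.normUsq g ≤ G.normUsq g' :=
  sum_le_sum fun u _ => mul_le_mul_of_nonneg_left
    (sum_le_sum fun α _ => pow_le_pow_left₀ (hg (u, α)) (h (u, α)) 2) (wU_nonneg u)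

lemma sum_normUsq_le {ι : Type*} (s : Finset ι) {g : ι → G.Q1 × G.A → ℝ}
    (hg : ∀ i ∈ s, 0 ≤ g i) : ∑ i ∈ s, G.normUsq (g i) ≤ G.normUsq (∑ i ∈ s, g i) :=
  calc
    ∑ i ∈ s, G.normUsq (g i) = ∑ u, G.wU u * ∑ α, ∑ i ∈ s, g i (u, α) ^ 2 := by
        simp only [normUsq]
        rw [sum_comm]
        simp only [← mul_sum]
        exact sum_congr rfl fun u _ => congrArg _ sum_comm
    _ ≤ G.normUsq (∑ i ∈ s, g i) := by
        simp only [normUsq, Finset.sum_apply]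
        gcongr with u _ α _
        · exact wU_nonneg u
        · exact sum_sq_le_sq_sum_of_nonneg fun i hi => hg i hi (u, α)

lemma IsSubBob.normUsq_op_le_one {f : G.Q2 × G.A → ℝ} (hf : G.IsSubBob f) :
    G.normUsq (G.op f) ≤ 1 := by
  rw [← sum_wU G]
  refine sum_le_sum fun u _ => mul_le_of_le_one_right (wU_nonneg u) ?_
  have hα (α : G.A) : 0 ≤ G.op f (u, α) := op_nonneg hf.1 (u, α)
  calc
    ∑ α, G.op f (u, α) ^ 2 ≤ (∑ α, G.op f (u, α)) ^ 2 :=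
        sum_sq_le_sq_sum_of_nonneg fun α _ => hα α
    _ ≤ 1 := pow_le_one₀ (sum_nonneg fun α _ => hα α) (hf.sum_op_le_one u)

lemma collVal_nonneg (G : ProjGame) : 0 ≤ G.collVal := by
  refine Real.sSup_nonneg ?_
  rintro _ ⟨f, -, rfl⟩
  exact Real.sqrt_nonneg _

lemma IsBob.sqrt_normUsq_op_le_collVal {f : G.Q2 × G.A → ℝ} (hf : G.IsBob f) :
    √(G.normUsq (G.op f)) ≤ G.collVal := by
  refine le_csSup ⟨1, ?_⟩ ⟨f, hf, rfl⟩
  rintro _ ⟨g, hg, rfl⟩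
  exact Real.sqrt_le_one.2 hg.isSubBob.normUsq_op_le_one

lemma IsSubBob.normUsq_op_le_collVal_sq {f : G.Q2 × G.A → ℝ} (hf : G.IsSubBob f) :
    G.normUsq (G.op f) ≤ G.collVal ^ 2 := by
  obtain ⟨g, hg, hfg⟩ := hf.exists_isBob_le
  calc
    G.normUsq (G.op f) ≤ G.normUsq (G.op g) := normUsq_mono (op_nonneg hf.1) (op_mono hfg)
    _ ≤ G.collVal ^ 2 := (Real.sqrt_le_left G.collVal_nonneg).1 hg.sqrt_normUsq_op_le_collVal

/-- The function `f_{u',α'}` on Bob's side of `G` obtained from a function `f` on Bob's side of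
`G ⊗ H` by applying the operator of `H` to the `H`-coordinates and evaluating at `(u', α')`. -/
noncomputable def opRight (f : (G.Q2 × H.Q2) × (G.A × H.A) → ℝ) (a : H.Q1 × H.A) :
    G.Q2 × G.A → ℝ :=
  fun p => H.op (fun q => f ((p.1, q.1), (p.2, q.2))) a

lemma opRight_nonneg {f : (G.Q2 × H.Q2) × (G.A × H.A) → ℝ} (hf : 0 ≤ f) (a : H.Q1 × H.A) :
    0 ≤ opRight f a :=
  fun _ => op_nonneg (fun _ => hf _) a

lemma op_tensor (f : (G.Q2 × H.Q2) × (G.A × H.A) → ℝ) (u : G.Q1) (u' : H.Q1) (α : G.A)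
    (α' : H.A) :
    (G.tensor H).op f ((u, u'), (α, α')) = G.op (opRight f (u', α')) (u, α) :=
  calc
    (G.tensor H).op f ((u, u'), (α, α'))
      = ∑ b : (G.Q2 × H.Q2) × (G.A × H.A),
          (G.tensor H).kernel ((u, u'), (α, α')) b * f b :=
        op_eq_sum_kernel (G := G.tensor H) f ((u, u'), (α, α'))
    _ = ∑ v, ∑ v', ∑ β, ∑ β', G.kernel (u, α) (v, β) *
          (H.kernel (u', α') (v', β') * f ((v, v'), (β, β'))) := by
        simp only [Fintype.sum_prod_type]
        congr! 4 with v _ v' _ β _ β' _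
        exact (congrArg (· * _) (kernel_tensor u u' α α' v v' β β')).trans (mul_assoc ..)
    _ = G.op (opRight f (u', α')) (u, α) := by
        simp only [opRight, op_eq_sum_kernel, Fintype.sum_prod_type, mul_sum]
        exact sum_congr rfl fun v _ => sum_comm

lemma normUsq_op_tensor (f : (G.Q2 × H.Q2) × (G.A × H.A) → ℝ) :
    (G.tensor H).normUsq ((G.tensor H).op f) =
      ∑ u', H.wU u' * ∑ α', G.normUsq (G.op (opRight f (u', α'))) :=
  calc
    (G.tensor H).normUsq ((G.tensor H).op f)
      = ∑ u : G.Q1 × H.Q1, (G.tensor H).wU u *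
          ∑ α : G.A × H.A, (G.tensor H).op f (u, α) ^ 2 := rfl
    _ = ∑ u, ∑ u', G.wU u * H.wU u' *
          ∑ α, ∑ α', G.op (opRight f (u', α')) (u, α) ^ 2 := by
        simp only [Fintype.sum_prod_type, wU_tensor, op_tensor]
    _ = ∑ u', H.wU u' * ∑ α', G.normUsq (G.op (opRight f (u', α'))) := by
        rw [sum_comm]
        refine sum_congr rfl fun u' _ => ?_
        simp only [normUsq]
        rw [sum_comm, mul_sum]
        refine sum_congr rfl fun u _ => ?_
        rw [← mul_sum, sum_comm]
        ring

lemma IsBob.marginal_right {f : (G.Q2 × H.Q2) × (G.A × H.A) → ℝ} (hf : (G.tensor H).IsBob f)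
    (v : G.Q2) : H.IsBob (∑ β, fun q => f ((v, q.1), (β, q.2))) := by
  refine ⟨fun q => ?_, fun v' => ?_⟩
  · rw [Finset.sum_apply]
    exact sum_nonneg fun β _ => hf.1 _
  · simp only [Finset.sum_apply]
    rw [sum_comm, ← Fintype.sum_prod_type']
    exact hf.2 (v, v')

lemma IsBob.isSubBob_sum_opRight {f : (G.Q2 × H.Q2) × (G.A × H.A) → ℝ}
    (hf : (G.tensor H).IsBob f) (u' : H.Q1) : G.IsSubBob (∑ α', opRight f (u', α')) := by
  refine ⟨sum_nonneg fun α' _ => opRight_nonneg hf.1 (u', α'), fun v => ?_⟩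
  calc
    ∑ β, (∑ α', opRight f (u', α')) (v, β)
      = ∑ α', H.op (∑ β, fun q => f ((v, q.1), (β, q.2))) (u', α') := by
        simp only [op_sum, Finset.sum_apply, opRight]
        exact sum_comm
    _ ≤ 1 := (hf.marginal_right v).isSubBob.sum_op_le_one u'

end ProjGame

/-- The collision value cannot increase under products: `‖G ⊗ H‖ ≤ ‖G‖`. -/
theorem collVal_tensor_le (G H : ProjGame) :
    (G.tensor H).collVal ≤ G.collVal := by
  refine Real.sSup_le ?_ G.collVal_nonneg
  rintro _ ⟨f, hf, rfl⟩
  refine (Real.sqrt_le_left G.collVal_nonneg).2 ?_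
  calc
    (G.tensor H).normUsq ((G.tensor H).op f)
      = ∑ u', H.wU u' * ∑ α', G.normUsq (G.op (ProjGame.opRight f (u', α'))) :=
        ProjGame.normUsq_op_tensor f
    _ ≤ ∑ u', H.wU u' * G.normUsq (G.op (∑ α', ProjGame.opRight f (u', α'))) := by
        gcongr with u' _
        · exact ProjGame.wU_nonneg u'
        · rw [ProjGame.op_sum]
          exact ProjGame.sum_normUsq_le _ fun α' _ =>
            ProjGame.op_nonneg (ProjGame.opRight_nonneg hf.1 (u', α'))
    _ ≤ ∑ u', H.wU u' * G.collVal ^ 2 := by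
        gcongr with u' _
        · exact ProjGame.wU_nonneg u'
        · exact (hf.isSubBob_sum_opRight u').normUsq_op_le_collVal_sq
    _ = G.collVal ^ 2 := by rw [← sum_mul, H.sum_wU, one_mul]
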